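/- Von Neumann's inequality fails in three variables: there exist a finite-dimensional complex Hilbert space, three pairwise commuting linear operators T₁, T₂, T₃ on it with ‖T_r‖ ≤ 1 for r = 1,2,3, and a polynomial p(z₁,z₂,z₃) in three variables with complex coefficients, such that ‖p(T₁,T₂,T₃)‖ > sup_{|z₁| ≤ 1, |z₂| ≤ 1, |z₃| ≤ 1} |p(z₁,z₂,z₃)|. -/

import Mathlib

open MvPolynomial

/-- For pairwise commuting operators `T 0, T 1, T 2`, the operator `p(T₁, T₂, T₃)` obtained
by substituting them into a three-variable polynomial `p`. -/
noncomputable def polyEvalTriple {H : Type*} [NormedAddCommGroup H] [InnerProductSpace ℂ H]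
    (p : MvPolynomial (Fin 3) ℂ) (T : Fin 3 → (H →L[ℂ] H)) : H →L[ℂ] H :=
  ∑ m ∈ p.support, MvPolynomial.coeff m p • (T 0 ^ m 0 * T 1 ^ m 1 * T 2 ^ m 2)

/-- The Crabb–Davie matrices, on the basis `e, f₁, f₂, f₃, g₁, g₂, g₃, h`. -/
def cdMat : Fin 3 → Matrix (Fin 8) (Fin 8) ℤ := ![
  !![0,0,0,0,0,0,0,0; 1,0,0,0,0,0,0,0; 0,0,0,0,0,0,0,0; 0,0,0,0,0,0,0,0;
     0,-1,0,0,0,0,0,0; 0,0,0,1,0,0,0,0; 0,0,1,0,0,0,0,0; 0,0,0,0,1,0,0,0],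
  !![0,0,0,0,0,0,0,0; 0,0,0,0,0,0,0,0; 1,0,0,0,0,0,0,0; 0,0,0,0,0,0,0,0;
     0,0,0,1,0,0,0,0; 0,0,-1,0,0,0,0,0; 0,1,0,0,0,0,0,0; 0,0,0,0,0,1,0,0],
  !![0,0,0,0,0,0,0,0; 0,0,0,0,0,0,0,0; 0,0,0,0,0,0,0,0; 1,0,0,0,0,0,0,0;
     0,0,1,0,0,0,0,0; 0,1,0,0,0,0,0,0; 0,0,0,-1,0,0,0,0; 0,0,0,0,0,0,1,0]]

/-- The ring homomorphism from integer matrices to operators. -/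
noncomputable def cdHom :
    Matrix (Fin 8) (Fin 8) ℤ →+* (EuclideanSpace ℂ (Fin 8) →L[ℂ] EuclideanSpace ℂ (Fin 8)) :=
  ((Matrix.toEuclideanCLM (n := Fin 8) (𝕜 := ℂ)).toAlgEquiv.toRingEquiv.toRingHom).comp
    ((Int.castRingHom ℂ).mapMatrix)

lemma cdHom_apply (A : Matrix (Fin 8) (Fin 8) ℤ) (x : EuclideanSpace ℂ (Fin 8)) (i : Fin 8) :
    cdHom A x i = ∑ j, (A i j : ℂ) * x j := by
  rfl

lemma cd_comm (r s : Fin 3) : cdMat r * cdMat s = cdMat s * cdMat r := by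
  revert r s
  decide +kernel

lemma cd_poly : cdMat 0 * cdMat 1 * cdMat 2 - cdMat 0 ^ 3 - cdMat 1 ^ 3 - cdMat 2 ^ 3
    = Matrix.of (fun i j => if i = 7 ∧ j = 0 then 4 else 0) := by
  simp only [pow_succ, pow_zero]
  decide +kernel

lemma cd_norm (r : Fin 3) : ‖cdHom (cdMat r)‖ ≤ 1 := by
  refine ContinuousLinearMap.opNorm_le_bound _ zero_le_one fun x => ?_
  rw [one_mul, EuclideanSpace.norm_eq, EuclideanSpace.norm_eq]
  apply Real.sqrt_le_sqrt
  simp only [cdHom_apply]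
  have h := fun i => sq_nonneg ‖x i‖
  have h4 := h 4
  have h5 := h 5
  have h6 := h 6
  have h7 := h 7
  fin_cases r <;> simp [Fin.sum_univ_eight, cdMat] <;> linarith

lemma pet_superset {H : Type*} [NormedAddCommGroup H] [InnerProductSpace ℂ H]
    (p : MvPolynomial (Fin 3) ℂ) (T : Fin 3 → (H →L[ℂ] H)) (s : Finset (Fin 3 →₀ ℕ))
    (hs : p.support ⊆ s) : polyEvalTriple p T =
      ∑ m ∈ s, MvPolynomial.coeff m p • (T 0 ^ m 0 * T 1 ^ m 1 * T 2 ^ m 2) := by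
  unfold polyEvalTriple
  refine Finset.sum_subset hs fun m _ hm => ?_
  rw [notMem_support_iff.mp hm, zero_smul]

lemma pet_add {H : Type*} [NormedAddCommGroup H] [InnerProductSpace ℂ H]
    (p q : MvPolynomial (Fin 3) ℂ) (T : Fin 3 → (H →L[ℂ] H)) :
    polyEvalTriple (p + q) T = polyEvalTriple p T + polyEvalTriple q T := by
  classical
  rw [pet_superset (p + q) T (p.support ∪ q.support) support_add,
    pet_superset p T (p.support ∪ q.support) Finset.subset_union_left,
    pet_superset q T (p.support ∪ q.support) Finset.subset_union_right,
    ← Finset.sum_add_distrib]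
  simp only [coeff_add, add_smul]

lemma pet_monomial {H : Type*} [NormedAddCommGroup H] [InnerProductSpace ℂ H]
    (m : Fin 3 →₀ ℕ) (a : ℂ) (T : Fin 3 → (H →L[ℂ] H)) :
    polyEvalTriple (monomial m a) T = a • (T 0 ^ m 0 * T 1 ^ m 1 * T 2 ^ m 2) := by
  rw [pet_superset _ T {m} support_monomial_subset, Finset.sum_singleton, coeff_monomial,
    if_pos rfl]

/-- Exponent vector. -/
noncomputable def ev (a b c : ℕ) : Fin 3 →₀ ℕ := Finsupp.equivFunOnFinite.symm ![a, b, c]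

/-- The polynomial `z₁z₂z₃ - z₁³ - z₂³ - z₃³`. -/
noncomputable def cdPoly : MvPolynomial (Fin 3) ℂ :=
  monomial (ev 1 1 1) 1 + monomial (ev 3 0 0) (-1) + monomial (ev 0 3 0) (-1)
    + monomial (ev 0 0 3) (-1)

lemma cdPoly_eval (z : Fin 3 → ℂ) :
    eval z cdPoly = z 0 * z 1 * z 2 - z 0 ^ 3 - z 1 ^ 3 - z 2 ^ 3 := by
  simp [cdPoly, eval_monomial, Finsupp.prod_fintype, Fin.prod_univ_three, ev]
  ring

lemma cdPoly_op : polyEvalTriple cdPoly (fun r => cdHom (cdMat r)) =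
    cdHom (Matrix.of (fun i j => if i = 7 ∧ j = 0 then 4 else 0)) := by
  rw [← cd_poly]
  simp only [cdPoly, pet_add, pet_monomial]
  simp [ev, sub_eq_add_neg]

lemma op_lower : 4 ≤ ‖polyEvalTriple cdPoly (fun r => cdHom (cdMat r))‖ := by
  rw [cdPoly_op]
  set A := cdHom (Matrix.of (fun i j : Fin 8 => if i = 7 ∧ j = 0 then (4 : ℤ) else 0)) with hA
  have h1 := A.le_opNorm (EuclideanSpace.single 0 1)
  have h2 := PiLp.norm_apply_le (A (EuclideanSpace.single 0 1)) 7
  have h3 : A (EuclideanSpace.single 0 1) 7 = 4 := by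
    rw [hA, cdHom_apply]
    simp
  rw [h3] at h2
  simp at h1 h2
  linarith

/-- Extreme points: four numbers of the unit disc with sum of modulus 4 are all equal. -/
lemma eq_of_norm_two {a b : ℂ} (ha : ‖a‖ ≤ 1) (hb : ‖b‖ ≤ 1) (h : 2 ≤ ‖a + b‖) : a = b := by
  have := parallelogram_law_with_norm ℝ a b
  have h0 : ‖a - b‖ = 0 := by
    nlinarith [norm_nonneg a, norm_nonneg b, norm_nonneg (a - b)]
  exact sub_eq_zero.mp (norm_eq_zero.mp h0)

lemma scalar_lt (x y z : ℂ) (hx : ‖x‖ ≤ 1) (hy : ‖y‖ ≤ 1) (hz : ‖z‖ ≤ 1) :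
    ‖x * y * z - x ^ 3 - y ^ 3 - z ^ 3‖ < 4 := by
  by_contra! h
  have ha : ‖x * y * z‖ ≤ 1 := by
    rw [norm_mul, norm_mul]
    exact mul_le_one₀ (mul_le_one₀ hx (norm_nonneg _) hy) (norm_nonneg _) hz
  have hb : ‖-x ^ 3‖ ≤ 1 := by
    rw [norm_neg, norm_pow]; exact pow_le_one₀ (norm_nonneg _) hx
  have hc : ‖-y ^ 3‖ ≤ 1 := by
    rw [norm_neg, norm_pow]; exact pow_le_one₀ (norm_nonneg _) hy
  have hd : ‖-z ^ 3‖ ≤ 1 := by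
    rw [norm_neg, norm_pow]; exact pow_le_one₀ (norm_nonneg _) hz
  have key : ∀ a b c d : ℂ, ‖a‖ ≤ 1 → ‖b‖ ≤ 1 → ‖c‖ ≤ 1 → ‖d‖ ≤ 1 → 4 ≤ ‖a + b + c + d‖ →
      a = b := by
    intro a b c d ha hb hc hd h
    apply eq_of_norm_two ha hb
    have h1 := norm_add_le (a + b + c) d
    have h2 := norm_add_le (a + b) c
    linarith
  have e1 := key _ _ _ _ ha hb hc hd (h.trans_eq (congrArg _ (by ring)))
  have e2 := key _ _ _ _ ha hc hb hd (h.trans_eq (congrArg _ (by ring)))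
  have e3 := key _ _ _ _ ha hd hc hb (h.trans_eq (congrArg _ (by ring)))
  have h0 : (x * y * z) ^ 3 = 0 := by
    have : (x * y * z) ^ 3 = -(x * y * z) ^ 3 := by
      calc (x * y * z) ^ 3 = -((-x ^ 3) * (-y ^ 3) * (-z ^ 3)) := by ring
        _ = -(x * y * z) ^ 3 := by rw [← e1, ← e2, ← e3]; ring
    linear_combination this / 2
  have h0 : x * y * z = 0 := by simpa using h0
  rw [h0] at e1 e2 e3
  have : x * y * z - x ^ 3 - y ^ 3 - z ^ 3 = 0 := by
    rw [h0]; linear_combination -e1 - e2 - e3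
  rw [this] at h
  norm_num at h

/-- **Von Neumann's inequality fails in three variables.** There are a finite-dimensional
complex Hilbert space, three pairwise commuting contractions `T 0, T 1, T 2` on it, and a
three-variable polynomial `p`, with `‖p(T₁,T₂,T₃)‖ > sup_{|z₁|≤1,|z₂|≤1,|z₃|≤1} |p(z)|`. -/
theorem von_neumann_fails_in_three_variables :
    ∃ (n : ℕ) (T : Fin 3 → (EuclideanSpace ℂ (Fin n) →L[ℂ] EuclideanSpace ℂ (Fin n)))
      (p : MvPolynomial (Fin 3) ℂ),
      (∀ r s : Fin 3, Commute (T r) (T s)) ∧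
      (∀ r : Fin 3, ‖T r‖ ≤ 1) ∧
      sSup {x : ℝ | ∃ z : Fin 3 → ℂ, (∀ r, ‖z r‖ ≤ 1) ∧ x = ‖MvPolynomial.eval z p‖} <
        ‖polyEvalTriple p T‖ := by
  refine ⟨8, fun r => cdHom (cdMat r), cdPoly, ?_, cd_norm, lt_of_lt_of_le ?_ op_lower⟩
  · intro r s
    exact Commute.map (show Commute (cdMat r) (cdMat s) from cd_comm r s) cdHom
  · have hS : {x : ℝ | ∃ z : Fin 3 → ℂ, (∀ r, ‖z r‖ ≤ 1) ∧ x = ‖MvPolynomial.eval z cdPoly‖} =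
        (fun z : Fin 3 → ℂ => ‖MvPolynomial.eval z cdPoly‖) '' Metric.closedBall 0 1 := by
      ext x
      simp [pi_norm_le_iff_of_nonneg, eq_comm]
    have hc : Continuous (fun z : Fin 3 → ℂ => ‖MvPolynomial.eval z cdPoly‖) :=
      (MvPolynomial.continuous_eval cdPoly).norm
    have hmem := ((isCompact_closedBall (0 : Fin 3 → ℂ) 1).image hc).sSup_mem
      ((Metric.nonempty_closedBall.mpr zero_le_one).image _)
    rw [← hS] at hmem
    obtain ⟨z, hz, hz'⟩ := hmem
    rw [hz', cdPoly_eval]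
    exact scalar_lt _ _ _ (hz 0) (hz 1) (hz 2)
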